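/- Let V = (V₁,…,V_n) be a vector of i.i.d. standard Gaussian random variables and let g : ℝⁿ → ℝ be a smooth function such that g and all its partial derivatives have subexponential growth at infinity, E[g(V)] = 0 and E[g(V)²] = 1, and assume the law of Y := g(V) is absolutely continuous with respect to Lebesgue measure. Then, with Z a standard Gaussian random variable, for every Borel set B ⊂ ℝ one has |P(Y ∈ B) − P(Z ∈ B)| ≤ 2 (E[(S(V) − 1)²])^{1/2}. -/

import Mathlib

open MeasureTheory ProbabilityTheory Real Set

/-- Chatterjee's function `S(v) = ∫₀¹ (1/(2√t)) E[ Σᵢ ∂ᵢg(v) ∂ᵢg(√t v + √(1−t) V) ] dt`. -/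
noncomputable def chatterjeeS {Ω : Type*} [MeasurableSpace Ω] (P : Measure Ω)
    {n : ℕ} (V : Ω → (Fin n → ℝ)) (g : (Fin n → ℝ) → ℝ) (v : Fin n → ℝ) : ℝ :=
  ∫ t in Set.Ioc (0 : ℝ) 1, (1 / (2 * Real.sqrt t)) *
    ∫ ω, (∑ i : Fin n, fderiv ℝ g v (Pi.single i 1) *
      fderiv ℝ g (Real.sqrt t • v + Real.sqrt (1 - t) • V ω) (Pi.single i 1)) ∂P

/-!
Let `γ` be a centred Gaussian measure and `R_θ` the rotation of angle `θ` on `E × E`, which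
preserves `γ ⊗ γ`. Differentiating `∫ H ∘ R_θ` in `θ` gives Gaussian integration by parts. Writing
`g(w) - g(v)` as the integral of the derivative of `g` along the rotation from `v` to `w`, and then
integrating by parts, expresses the covariance of two functions as the integral of their covariance
kernel:
`∫ f (g - ∫ g) dγ = ∫ covarianceKernel γ f g dγ`.

With `f = φ ∘ g` and `∫ g dγ = 0`, the chain rule turns this into `∫ g φ(g) dγ = ∫ φ'(g) S dγ`,
where `S = covarianceKernel γ g g`. Hence `|∫ (φ'(g) - g φ(g)) dγ| ≤ sup |φ'| ∫ |S - 1| dγ`. Taking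
for `φ` the solution of Stein's equation for a continuous test function with values in `[0, 1]`,
which satisfies `|φ'| ≤ 2`, and applying the Cauchy–Schwarz inequality gives the bound for such test
functions. These determine the total variation distance. For the standard Gaussian measure on `ℝⁿ`,
the substitution `t = cos² θ` identifies `S` with Chatterjee's function.
-/

section ExponentialGrowth

variable {X Y F G H : Type*} [NormedAddCommGroup X] [NormedAddCommGroup Y]
  [NormedAddCommGroup F] [NormedAddCommGroup G] [NormedAddCommGroup H]

/-- At most exponential growth at infinity, of any rate. -/
def HasExpGrowth (f : X → F) : Prop :=
  ∃ C a : ℝ, ∀ x, ‖f x‖ ≤ C * exp (a * ‖x‖)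

/-- Finiteness of all exponential moments of the norm: the class of measures which integrate every
function with `HasExpGrowth`. -/
def HasExpMoments [MeasurableSpace X] (ν : Measure X) : Prop :=
  ∀ a : ℝ, Integrable (fun x => exp (a * ‖x‖)) ν

namespace HasExpGrowth

lemma exists_nonneg {f : X → F} (hf : HasExpGrowth f) :
    ∃ C a : ℝ, 0 ≤ C ∧ 0 ≤ a ∧ ∀ x, ‖f x‖ ≤ C * exp (a * ‖x‖) := by
  obtain ⟨C, a, h⟩ := hf
  have hC : 0 ≤ C := by simpa using (norm_nonneg _).trans (h 0)
  refine ⟨C, |a|, hC, abs_nonneg a, fun x => (h x).trans ?_⟩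
  gcongr
  exact le_abs_self a

lemma of_norm_le {f : X → F} {C : ℝ} (hf : ∀ x, ‖f x‖ ≤ C) : HasExpGrowth f :=
  ⟨C, 0, by simpa using hf⟩

lemma of_norm_le_mul_norm {f : X → F} {K : ℝ} (hf : ∀ x, ‖f x‖ ≤ K * ‖x‖) : HasExpGrowth f := by
  refine ⟨|K|, 1, fun x => (hf x).trans ?_⟩
  rw [one_mul]
  gcongr
  · exact le_abs_self K
  · linarith [add_one_le_exp ‖x‖]

lemma of_norm_le_mul {f : X → F} {g : X → G} {h : X → H} (hf : HasExpGrowth f)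
    (hg : HasExpGrowth g) (hh : ∀ x, ‖h x‖ ≤ ‖f x‖ * ‖g x‖) : HasExpGrowth h := by
  obtain ⟨C, a, hC, -, hf⟩ := hf.exists_nonneg
  obtain ⟨D, b, hg⟩ := hg
  refine ⟨C * D, a + b, fun x => (hh x).trans ?_⟩
  calc ‖f x‖ * ‖g x‖ ≤ (C * exp (a * ‖x‖)) * (D * exp (b * ‖x‖)) := by
        gcongr
        exacts [hf x, hg x]
    _ = C * D * exp ((a + b) * ‖x‖) := by rw [add_mul, exp_add]; ring

lemma mul {f g : X → ℝ} (hf : HasExpGrowth f) (hg : HasExpGrowth g) :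
    HasExpGrowth fun x => f x * g x :=
  hf.of_norm_le_mul hg fun _ => norm_mul_le _ _

lemma const (c : F) : HasExpGrowth fun _ : X => c :=
  of_norm_le fun _ => le_refl ‖c‖

lemma smul [NormedSpace ℝ F] {c : X → ℝ} {f : X → F} (hc : HasExpGrowth c)
    (hf : HasExpGrowth f) : HasExpGrowth fun x => c x • f x :=
  hc.of_norm_le_mul hf fun x => (norm_smul (c x) (f x)).le

lemma clm_apply [NormedSpace ℝ F] [NormedSpace ℝ G] {A : X → F →L[ℝ] G} {u : X → F}
    (hA : HasExpGrowth A) (hu : HasExpGrowth u) : HasExpGrowth fun x => A x (u x) :=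
  hA.of_norm_le_mul hu fun x => (A x).le_opNorm (u x)

lemma bilin_apply [NormedSpace ℝ F] [NormedSpace ℝ G] [NormedSpace ℝ H] (B : F →L[ℝ] G →L[ℝ] H)
    {f : X → F} {g : X → G} (hf : HasExpGrowth f) (hg : HasExpGrowth g) :
    HasExpGrowth fun x => B (f x) (g x) :=
  ((const B).clm_apply hf).clm_apply hg

lemma add {f g : X → F} (hf : HasExpGrowth f) (hg : HasExpGrowth g) :
    HasExpGrowth fun x => f x + g x := by
  obtain ⟨C, a, hC, -, hf⟩ := hf.exists_nonneg
  obtain ⟨D, b, hD, -, hg⟩ := hg.exists_nonneg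
  refine ⟨C + D, max a b, fun x => (norm_add_le _ _).trans ?_⟩
  calc ‖f x‖ + ‖g x‖ ≤ C * exp (a * ‖x‖) + D * exp (b * ‖x‖) := add_le_add (hf x) (hg x)
    _ ≤ C * exp (max a b * ‖x‖) + D * exp (max a b * ‖x‖) := by
        gcongr
        exacts [le_max_left a b, le_max_right a b]
    _ = (C + D) * exp (max a b * ‖x‖) := by ring

lemma neg {f : X → F} (hf : HasExpGrowth f) : HasExpGrowth fun x => -f x := by
  simpa only [HasExpGrowth, norm_neg] using hf

lemma sub {f g : X → F} (hf : HasExpGrowth f) (hg : HasExpGrowth g) :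
    HasExpGrowth fun x => f x - g x := by
  simpa only [sub_eq_add_neg] using hf.add hg.neg

lemma comp {f : X → F} {u : Y → X} {K : ℝ} (hf : HasExpGrowth f) (hu : ∀ y, ‖u y‖ ≤ K * ‖y‖) :
    HasExpGrowth fun y => f (u y) := by
  obtain ⟨C, a, hC, ha, hf⟩ := hf.exists_nonneg
  refine ⟨C, a * K, fun y => (hf _).trans ?_⟩
  rw [mul_assoc]
  gcongr
  exact hu y

lemma comp_fst {f : X → F} (hf : HasExpGrowth f) : HasExpGrowth fun p : X × Y => f p.1 :=
  hf.comp (K := 1) fun p => by simpa using norm_fst_le p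

lemma comp_snd {f : Y → F} (hf : HasExpGrowth f) : HasExpGrowth fun p : X × Y => f p.2 :=
  hf.comp (K := 1) fun p => by simpa using norm_snd_le p

lemma prodMk_left {f : X × Y → F} (hf : HasExpGrowth f) (x : X) :
    HasExpGrowth fun y => f (x, y) := by
  obtain ⟨C, a, hC, ha, hf⟩ := hf.exists_nonneg
  refine ⟨C * exp (a * ‖x‖), a, fun y => (hf _).trans ?_⟩
  rw [mul_assoc, ← exp_add, ← mul_add]
  gcongr
  exact max_le_add_of_nonneg (norm_nonneg x) (norm_nonneg y)

lemma of_fderiv [NormedSpace ℝ X] [NormedSpace ℝ F] {f : X → F} (hf : Differentiable ℝ f)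
    (hf' : HasExpGrowth (fderiv ℝ f)) : HasExpGrowth f := by
  obtain ⟨C, a, hC, ha, hf'⟩ := hf'.exists_nonneg
  have hdiff : HasExpGrowth fun x => f x - f 0 := by
    refine HasExpGrowth.of_norm_le_mul (f := fun x : X => C * exp (a * ‖x‖)) (g := id)
      ⟨C, a, fun x => (norm_of_nonneg (by positivity)).le⟩
      (of_norm_le_mul_norm (K := 1) fun x => (one_mul _).ge) fun x => ?_
    have hball : ∀ y ∈ Metric.closedBall (0 : X) ‖x‖, ‖fderiv ℝ f y‖ ≤ C * exp (a * ‖x‖) := by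
      intro y hy
      refine (hf' y).trans ?_
      gcongr
      simpa using hy
    have hmean := (convex_closedBall (0 : X) ‖x‖).norm_image_sub_le_of_norm_fderiv_le
      (fun y _ => hf y) hball (Metric.mem_closedBall_self (norm_nonneg x)) (y := x) (by simp)
    rw [norm_of_nonneg (by positivity)]
    simpa using hmean
  simpa using hdiff.add (.const (f 0))

lemma integrable [MeasurableSpace X] {f : X → F} (hf : HasExpGrowth f) {ν : Measure X}
    (hν : HasExpMoments ν) (hfm : AEStronglyMeasurable f ν) : Integrable f ν := by
  obtain ⟨C, a, hf⟩ := hf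
  exact ((hν a).const_mul C).mono' hfm (.of_forall hf)

lemma integral_prod_right [NormedSpace ℝ F] [MeasurableSpace Y] {K : X × Y → F}
    (hK : HasExpGrowth K) {ν : Measure Y} (hν : HasExpMoments ν) :
    HasExpGrowth fun x => ∫ y, K (x, y) ∂ν := by
  obtain ⟨C, a, hC, ha, hK⟩ := hK.exists_nonneg
  refine ⟨C * ∫ y, exp (a * ‖y‖) ∂ν, a, fun x => ?_⟩
  calc ‖∫ y, K (x, y) ∂ν‖ ≤ ∫ y, C * exp (a * ‖x‖) * exp (a * ‖y‖) ∂ν := by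
        refine norm_integral_le_of_norm_le ((hν a).const_mul _) (.of_forall fun y => ?_)
        refine (hK (x, y)).trans ?_
        rw [mul_assoc, ← exp_add, ← mul_add]
        gcongr
        exact max_le_add_of_nonneg (norm_nonneg x) (norm_nonneg y)
    _ = C * (∫ y, exp (a * ‖y‖) ∂ν) * exp (a * ‖x‖) := by rw [integral_const_mul]; ring

lemma integral_prod_left [NormedSpace ℝ F] [MeasurableSpace X] {K : X × Y → F}
    (hK : HasExpGrowth K) {ν : Measure X} (hν : HasExpMoments ν) :
    HasExpGrowth fun y => ∫ x, K (x, y) ∂ν :=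
  (hK.comp (u := Prod.swap) (K := 1) fun p => by simp [Prod.norm_def, max_comm]).integral_prod_right
    hν

end HasExpGrowth

namespace HasExpMoments

variable [MeasurableSpace X] [MeasurableSpace Y]

lemma mono {μ ν : Measure X} (hν : HasExpMoments ν) (h : μ ≤ ν) : HasExpMoments μ :=
  fun a => (hν a).mono_measure h

lemma prod [OpensMeasurableSpace X] [OpensMeasurableSpace Y] {μ : Measure X} {ν : Measure Y}
    [SFinite μ] [SFinite ν] [SecondCountableTopology X]
    (hμ : HasExpMoments μ) (hν : HasExpMoments ν) : HasExpMoments (μ.prod ν) := by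
  intro a
  refine ((hμ |a|).mul_prod (hν |a|)).mono' (by fun_prop) (.of_forall fun p => ?_)
  rw [norm_of_nonneg (exp_pos _).le, ← exp_add, ← mul_add]
  gcongr
  · exact le_abs_self a
  · exact max_le_add_of_nonneg (norm_nonneg p.1) (norm_nonneg p.2)

lemma restrict_of_isCompact [OpensMeasurableSpace X] {ν : Measure X}
    [IsFiniteMeasureOnCompacts ν] {s : Set X} (hs : IsCompact s) : HasExpMoments (ν.restrict s) :=
  fun _ => ContinuousOn.integrableOn_compact hs (by fun_prop)

lemma restrict_uIoc (a b : ℝ) : HasExpMoments (volume.restrict (uIoc a b)) :=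
  (restrict_of_isCompact isCompact_Icc).mono (Measure.restrict_mono Ioc_subset_Icc_self le_rfl)

lemma of_isGaussian [NormedSpace ℝ X] [BorelSpace X] [CompleteSpace X]
    [SecondCountableTopology X] (γ : Measure X) [IsGaussian γ] : HasExpMoments γ := by
  intro a
  obtain ⟨C, hC, hint⟩ := IsGaussian.exists_integrable_exp_sq γ
  refine (hint.const_mul (exp (a ^ 2 / (4 * C)))).mono' (by fun_prop) (.of_forall fun x => ?_)
  rw [norm_of_nonneg (exp_pos _).le, ← exp_add, exp_le_exp]
  have hsq : a ^ 2 / (4 * C) + C * ‖x‖ ^ 2 - a * ‖x‖ = C * (‖x‖ - a / (2 * C)) ^ 2 := by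
    field_simp
    ring
  linarith [mul_nonneg hC.le (sq_nonneg (‖x‖ - a / (2 * C)))]

end HasExpMoments

lemma HasExpGrowth.integrable_uIoc_prod [MeasurableSpace X] [OpensMeasurableSpace X]
    {K : ℝ × X → F} (hK : HasExpGrowth K) {μ : Measure X} [SFinite μ] (hμ : HasExpMoments μ)
    (a b : ℝ) (hm : AEStronglyMeasurable K ((volume.restrict (uIoc a b)).prod μ)) :
    Integrable K ((volume.restrict (uIoc a b)).prod μ) :=
  hK.integrable ((HasExpMoments.restrict_uIoc a b).prod hμ) hm

end ExponentialGrowth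

section Rotation

variable {E F : Type*} [NormedAddCommGroup E] [NormedSpace ℝ E] [NormedAddCommGroup F]
  [NormedSpace ℝ F]

open ContinuousLinearMap (rotation)

lemma norm_cos_smul_add_sin_smul_le (θ : ℝ) (v w : E) :
    ‖cos θ • v + sin θ • w‖ ≤ ‖v‖ + ‖w‖ := by
  refine (norm_add_le _ _).trans ?_
  rw [norm_smul, norm_smul]
  gcongr
  · exact mul_le_of_le_one_left (norm_nonneg v) (abs_cos_le_one θ)
  · exact mul_le_of_le_one_left (norm_nonneg w) (abs_sin_le_one θ)

lemma norm_rotation_le (θ : ℝ) (z : E × E) : ‖rotation θ z‖ ≤ 2 * ‖z‖ := by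
  have hz : ‖z.1‖ + ‖z.2‖ ≤ 2 * ‖z‖ := by linarith [norm_fst_le z, norm_snd_le z]
  refine (max_le ?_ ?_).trans hz
  · exact norm_cos_smul_add_sin_smul_le θ z.1 z.2
  · simpa [ContinuousLinearMap.rotation_apply, add_comm] using
      norm_cos_smul_add_sin_smul_le θ z.2 (-z.1)

@[fun_prop]
lemma continuous_rotation_apply {X : Type*} [TopologicalSpace X] {a : X → ℝ} {u : X → E × E}
    (ha : Continuous a) (hu : Continuous u) : Continuous fun x => rotation (a x) (u x) := by
  simp only [ContinuousLinearMap.rotation_apply]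
  fun_prop

lemma rotation_zero (z : E × E) : rotation 0 z = z := by
  simp [ContinuousLinearMap.rotation_apply]

lemma rotation_neg_rotation (θ : ℝ) (z : E × E) : rotation (-θ) (rotation θ z) = z := by
  have hsq : cos θ * cos θ + sin θ * sin θ = 1 := by linarith [cos_sq_add_sin_sq θ]
  ext
  · calc cos (-θ) • (cos θ • z.1 + sin θ • z.2) + sin (-θ) • (-sin θ • z.1 + cos θ • z.2)
        = (cos θ * cos θ + sin θ * sin θ) • z.1 := by rw [cos_neg, sin_neg]; module
      _ = z.1 := by rw [hsq, one_smul]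
  · calc -sin (-θ) • (cos θ • z.1 + sin θ • z.2) + cos (-θ) • (-sin θ • z.1 + cos θ • z.2)
        = (cos θ * cos θ + sin θ * sin θ) • z.2 := by rw [cos_neg, sin_neg]; module
      _ = z.2 := by rw [hsq, one_smul]

lemma hasDerivAt_rotation (z : E × E) (θ : ℝ) :
    HasDerivAt (fun θ => rotation θ z) ((rotation θ z).2, -(rotation θ z).1) θ := by
  simp only [ContinuousLinearMap.rotation_apply]
  refine (((hasDerivAt_cos θ).smul_const z.1).add ((hasDerivAt_sin θ).smul_const z.2)).prodMk ?_
  refine (((hasDerivAt_sin θ).neg.smul_const z.1).add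
    ((hasDerivAt_cos θ).smul_const z.2)).congr_deriv ?_
  module

lemma integral_fderiv_rotation [CompleteSpace F] {H : E × E → F} (hH : ContDiff ℝ 1 H)
    (z : E × E) (T : ℝ) :
    ∫ θ in 0..T, fderiv ℝ H (rotation θ z) ((rotation θ z).2, -(rotation θ z).1) =
      H (rotation T z) - H z := by
  have hderiv (θ : ℝ) : HasDerivAt (fun θ => H (rotation θ z))
      (fderiv ℝ H (rotation θ z) ((rotation θ z).2, -(rotation θ z).1)) θ :=
    (hH.differentiable one_ne_zero _).hasFDerivAt.comp_hasDerivAt θ (hasDerivAt_rotation z θ)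
  have := hH.continuous_fderiv one_ne_zero
  rw [intervalIntegral.integral_eq_sub_of_hasDerivAt (fun θ _ => hderiv θ)
    (Continuous.intervalIntegrable (by fun_prop) _ _), rotation_zero]

lemma fderiv_comp_rotation_neg {f : E → F} (hf : Differentiable ℝ f) (θ : ℝ) (u w : E) :
    fderiv ℝ (fun w => f (rotation (-θ) (u, w)).1) w =
      -sin θ • fderiv ℝ f (rotation (-θ) (u, w)).1 := by
  have harg : HasFDerivAt (fun w => (rotation (-θ) (u, w)).1) (-sin θ • .id ℝ E) w := by
    simp only [ContinuousLinearMap.rotation_apply, cos_neg, sin_neg]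
    exact ((hasFDerivAt_id w).const_smul (-sin θ)).const_add _
  have hcomp : HasFDerivAt (fun w => f (rotation (-θ) (u, w)).1) _ w :=
    (hf _).hasFDerivAt.comp w harg
  rw [hcomp.fderiv, ContinuousLinearMap.comp_smul, ContinuousLinearMap.comp_id]

lemma integral_fderiv_rotation_fst [CompleteSpace F] {f : E → F} (hf : ContDiff ℝ 1 f)
    (z : E × E) :
    ∫ θ in 0..π / 2, fderiv ℝ f (rotation θ z).1 (rotation θ z).2 = f z.2 - f z.1 := by
  have hfst (p : E × E) : fderiv ℝ (fun p : E × E => f p.1) p = fderiv ℝ f p.1 ∘SL .fst ℝ E E :=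
    ((hf.differentiable one_ne_zero p.1).hasFDerivAt.comp p hasFDerivAt_fst).fderiv
  simpa [hfst, ContinuousLinearMap.rotation_apply] using
    integral_fderiv_rotation (H := fun p : E × E => f p.1) (by fun_prop) z (π / 2)

variable [MeasurableSpace E] [BorelSpace E] [CompleteSpace E] [SecondCountableTopology E]
  {γ : Measure E} [IsGaussian γ]

lemma integral_comp_rotation (hγ : γ[id] = 0) (θ : ℝ) {K : E × E → F} (hK : Continuous K) :
    ∫ z, K (rotation θ z) ∂γ.prod γ = ∫ z, K z ∂γ.prod γ := by
  conv_rhs => rw [← IsGaussian.map_rotation_eq_self hγ θ]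
  rw [integral_map (by fun_prop) hK.aestronglyMeasurable]

lemma integrable_comp_rotation (hγ : γ[id] = 0) (θ : ℝ) {G : Type*} [NormedAddCommGroup G]
    {K : E × E → G} (hK : Integrable K (γ.prod γ)) :
    Integrable (fun z => K (rotation θ z)) (γ.prod γ) := by
  rw [← IsGaussian.map_rotation_eq_self hγ θ] at hK
  exact hK.comp_measurable (by fun_prop)

/- Integrating `d/dθ (H ∘ R_θ) = K ∘ R_θ` over the invariant measure gives `∫ K = 0`. -/
lemma integral_fderiv_rotation_eq_zero (hγ : γ[id] = 0) {H : E × E → ℝ} (hH : ContDiff ℝ 1 H)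
    (hint : Integrable H (γ.prod γ))
    (hgrowth : HasExpGrowth fun z : E × E => fderiv ℝ H z (z.2, -z.1)) :
    ∫ z, fderiv ℝ H z (z.2, -z.1) ∂γ.prod γ = 0 := by
  set K : E × E → ℝ := fun z => fderiv ℝ H z (z.2, -z.1)
  have := hH.continuous_fderiv one_ne_zero
  have hK : Continuous K := by fun_prop
  have hKrot : HasExpGrowth fun p : ℝ × (E × E) => K (rotation p.1 p.2) :=
    hgrowth.comp (K := 2) fun p => (norm_rotation_le p.1 p.2).trans (by gcongr; exact norm_snd_le p)
  calc ∫ z, K z ∂γ.prod γ = ∫ θ in (0 : ℝ)..1, ∫ z, K (rotation θ z) ∂γ.prod γ := by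
        simp [integral_comp_rotation hγ _ hK]
    _ = ∫ z, (∫ θ in (0 : ℝ)..1, K (rotation θ z)) ∂γ.prod γ :=
        intervalIntegral_integral_swap (hKrot.integrable_uIoc_prod
          (HasExpMoments.of_isGaussian _) 0 1 (Continuous.aestronglyMeasurable (by fun_prop)))
    _ = ∫ z, (H (rotation 1 z) - H z) ∂γ.prod γ := by
        simp_rw [K, integral_fderiv_rotation hH]
    _ = 0 := by
        rw [integral_sub (integrable_comp_rotation hγ 1 hint) hint,
          integral_comp_rotation hγ 1 hH.continuous, sub_self]

end Rotation

section GaussianIntegrationByParts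

open ContinuousLinearMap (rotation)

variable {E : Type*} [NormedAddCommGroup E] [NormedSpace ℝ E]

lemma fderiv_fst_mul_snd_apply {F : E → ℝ} (hF : Differentiable ℝ F) (L : StrongDual ℝ E)
    (z : E × E) : fderiv ℝ (fun z : E × E => F z.1 * L z.2) z (z.2, -z.1) =
      fderiv ℝ F z.1 z.2 * L z.2 - F z.1 * L z.1 := by
  have hfst : HasFDerivAt (fun z : E × E => F z.1) (fderiv ℝ F z.1 ∘SL .fst ℝ E E) z :=
    (hF z.1).hasFDerivAt.comp z hasFDerivAt_fst
  have hsnd : HasFDerivAt (fun z : E × E => L z.2) (L ∘SL .snd ℝ E E) z :=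
    (L ∘SL .snd ℝ E E).hasFDerivAt
  rw [(hfst.fun_mul hsnd).fderiv]
  simp only [add_apply, smul_apply, ContinuousLinearMap.comp_apply, ContinuousLinearMap.coe_fst',
    ContinuousLinearMap.coe_snd', map_neg, smul_eq_mul]
  ring

variable [MeasurableSpace E] [BorelSpace E] [CompleteSpace E] [SecondCountableTopology E]
  {γ : Measure E} [IsGaussian γ]

lemma covarianceBilinDual_eq_integral_mul (hγ : γ[id] = 0) (L M : StrongDual ℝ E) :
    covarianceBilinDual γ L M = ∫ x, L x * M x ∂γ := by
  simp_rw [covarianceBilinDual_apply' IsGaussian.memLp_two_id, hγ, sub_zero]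

lemma integral_mul_dual_eq_integral_covarianceBilinDual (hγ : γ[id] = 0) {F : E → ℝ}
    (hF : ContDiff ℝ 1 F) (hF' : HasExpGrowth (fderiv ℝ F)) (L : StrongDual ℝ E) :
    ∫ x, F x * L x ∂γ = ∫ x, covarianceBilinDual γ (fderiv ℝ F x) L ∂γ := by
  have hFdiff := hF.differentiable one_ne_zero
  have := hF.continuous_fderiv one_ne_zero
  have hmom := HasExpMoments.of_isGaussian (γ.prod γ)
  have hFgrowth := HasExpGrowth.of_fderiv hFdiff hF'
  have hL : HasExpGrowth L := .of_norm_le_mul_norm L.le_opNorm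
  have hid : HasExpGrowth fun z : E × E => z.2 := .of_norm_le_mul_norm (K := 1) (by simp)
  have hA : HasExpGrowth fun z : E × E => fderiv ℝ F z.1 z.2 * L z.2 :=
    (hF'.comp_fst.clm_apply hid).mul hL.comp_snd
  have hB : HasExpGrowth fun z : E × E => F z.1 * L z.1 := hFgrowth.comp_fst.mul hL.comp_fst
  have hAint := hA.integrable hmom (Continuous.aestronglyMeasurable (by fun_prop))
  have hBint := hB.integrable hmom (Continuous.aestronglyMeasurable (by fun_prop))
  have hHint := (hFgrowth.comp_fst.mul hL.comp_snd).integrable hmom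
    (Continuous.aestronglyMeasurable (by fun_prop))
  have hinv := integral_fderiv_rotation_eq_zero hγ (by fun_prop) hHint
    (by simpa only [fderiv_fst_mul_snd_apply hFdiff] using hA.sub hB)
  simp only [fderiv_fst_mul_snd_apply hFdiff] at hinv
  rw [integral_sub hAint hBint, sub_eq_zero, integral_prod _ hAint,
    integral_fun_fst fun v => F v * L v, probReal_univ, one_smul] at hinv
  simp_rw [covarianceBilinDual_eq_integral_mul hγ, hinv]

lemma integral_comp_rotation_neg_mul_dual (hγ : γ[id] = 0) {f : E → ℝ} (hf : ContDiff ℝ 1 f)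
    (hf' : HasExpGrowth (fderiv ℝ f)) (θ : ℝ) (u : E) (L : StrongDual ℝ E) :
    ∫ w, f (rotation (-θ) (u, w)).1 * L w ∂γ =
      -sin θ * ∫ w, covarianceBilinDual γ (fderiv ℝ f (rotation (-θ) (u, w)).1) L ∂γ := by
  have hderiv := fderiv_comp_rotation_neg (hf.differentiable one_ne_zero) θ u
  have hrot (z : E × E) : ‖(rotation (-θ) z).1‖ ≤ 2 * ‖z‖ :=
    (norm_fst_le _).trans (norm_rotation_le _ z)
  have hgrowth : HasExpGrowth (fderiv ℝ fun w => f (rotation (-θ) (u, w)).1) := by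
    rw [funext hderiv]
    exact (HasExpGrowth.const _).smul ((hf'.comp hrot).prodMk_left u)
  rw [integral_mul_dual_eq_integral_covarianceBilinDual hγ (by fun_prop) hgrowth]
  simp only [hderiv, map_smul, smul_apply, smul_eq_mul, integral_const_mul]

end GaussianIntegrationByParts

lemma integral_mul_sub_integral_eq_integral_prod {X : Type*} [MeasurableSpace X] {ν : Measure X}
    [IsProbabilityMeasure ν] {f g : X → ℝ} (hf : Integrable f ν) (hg : Integrable g ν)
    (hfg : Integrable (fun x => f x * g x) ν) :
    ∫ x, f x * (g x - ∫ y, g y ∂ν) ∂ν = ∫ z, f z.1 * (g z.1 - g z.2) ∂ν.prod ν := by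
  simp only [mul_sub]
  rw [integral_sub (hfg.comp_fst ν) (hf.mul_prod hg), integral_sub hfg (hf.mul_const _),
    integral_prod_mul, integral_fun_fst fun x => f x * g x, integral_mul_const, probReal_univ,
    one_smul]

section CovarianceKernel

variable {E : Type*} [NormedAddCommGroup E] [NormedSpace ℝ E] [MeasurableSpace E] [BorelSpace E]

open ContinuousLinearMap (rotation)

/-- The pairing of `Df(v)` with the Mehler average `∫ Dg(cos θ v + sin θ w) dγ(w)` of `Dg`, through
the covariance form of `γ`. The angle `θ` stands for the time `s` of the Ornstein–Uhlenbeck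
semigroup with `exp (-s) = cos θ`. -/
noncomputable def mehlerCovariance (γ : Measure E) (f g : E → ℝ) (θ : ℝ) (v : E) : ℝ :=
  ∫ w, covarianceBilinDual γ (fderiv ℝ f v) (fderiv ℝ g (cos θ • v + sin θ • w)) ∂γ

/-- The carré du champ `Γ(f, -𝓛⁻¹g)` of the Ornstein–Uhlenbeck generator `𝓛` of `γ`, whose integral
is the covariance of `f` and `g`. -/
noncomputable def covarianceKernel (γ : Measure E) (f g : E → ℝ) (v : E) : ℝ :=
  ∫ θ in 0..π / 2, sin θ * mehlerCovariance γ f g θ v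

lemma covarianceKernel_comp (γ : Measure E) {φ : ℝ → ℝ} {f : E → ℝ} {v : E}
    (hφ : DifferentiableAt ℝ φ (f v)) (hf : DifferentiableAt ℝ f v) (g : E → ℝ) :
    covarianceKernel γ (φ ∘ f) g v = deriv φ (f v) * covarianceKernel γ f g v := by
  have hchain : fderiv ℝ (φ ∘ f) v = deriv φ (f v) • fderiv ℝ f v :=
    (hφ.hasDerivAt.comp_hasFDerivAt v hf.hasFDerivAt).fderiv
  simp only [covarianceKernel, mehlerCovariance, hchain, map_smul,
    smul_apply, smul_eq_mul, integral_const_mul]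
  rw [← intervalIntegral.integral_const_mul]
  simp only [mul_left_comm]

variable [SecondCountableTopology E] {γ : Measure E} [IsGaussian γ] {f g : E → ℝ}

lemma stronglyMeasurable_mehlerCovariance (hf : ContDiff ℝ 1 f) (hg : ContDiff ℝ 1 g) :
    StronglyMeasurable fun p : ℝ × E => mehlerCovariance γ f g p.1 p.2 := by
  have := hf.continuous_fderiv one_ne_zero
  have := hg.continuous_fderiv one_ne_zero
  exact StronglyMeasurable.integral_prod_right (f := fun (p : ℝ × E) w =>
    covarianceBilinDual γ (fderiv ℝ f p.2) (fderiv ℝ g (cos p.1 • p.2 + sin p.1 • w)))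
    (Continuous.stronglyMeasurable (by fun_prop))

lemma stronglyMeasurable_sin_mul_mehlerCovariance (hf : ContDiff ℝ 1 f) (hg : ContDiff ℝ 1 g) :
    StronglyMeasurable fun p : ℝ × E => sin p.1 * mehlerCovariance γ f g p.1 p.2 :=
  (Continuous.stronglyMeasurable (by fun_prop)).mul (stronglyMeasurable_mehlerCovariance hf hg)

lemma stronglyMeasurable_covarianceKernel (hf : ContDiff ℝ 1 f) (hg : ContDiff ℝ 1 g) :
    StronglyMeasurable (covarianceKernel γ f g) := by
  unfold covarianceKernel
  simp only [intervalIntegral.integral_of_le pi_div_two_pos.le]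
  exact (stronglyMeasurable_sin_mul_mehlerCovariance hf hg).integral_prod_left'

variable [CompleteSpace E]

lemma hasExpGrowth_mehlerCovariance (hf' : HasExpGrowth (fderiv ℝ f))
    (hg' : HasExpGrowth (fderiv ℝ g)) :
    HasExpGrowth fun p : ℝ × E => mehlerCovariance γ f g p.1 p.2 := by
  have harg (p : (ℝ × E) × E) : ‖cos p.1.1 • p.1.2 + sin p.1.1 • p.2‖ ≤ 2 * ‖p‖ := by
    have := norm_cos_smul_add_sin_smul_le p.1.1 p.1.2 p.2
    linarith [norm_snd_le p, norm_snd_le p.1, norm_fst_le p]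
  exact (HasExpGrowth.bilin_apply (covarianceBilinDual γ) hf'.comp_snd.comp_fst
    (hg'.comp harg)).integral_prod_right (.of_isGaussian γ)

lemma hasExpGrowth_sin_mul_mehlerCovariance (hf' : HasExpGrowth (fderiv ℝ f))
    (hg' : HasExpGrowth (fderiv ℝ g)) :
    HasExpGrowth fun p : ℝ × E => sin p.1 * mehlerCovariance γ f g p.1 p.2 :=
  HasExpGrowth.mul (.of_norm_le fun p => abs_sin_le_one p.1) (hasExpGrowth_mehlerCovariance hf' hg')

lemma hasExpGrowth_covarianceKernel (hf' : HasExpGrowth (fderiv ℝ f))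
    (hg' : HasExpGrowth (fderiv ℝ g)) : HasExpGrowth (covarianceKernel γ f g) := by
  unfold covarianceKernel
  simp only [intervalIntegral.integral_of_le pi_div_two_pos.le,
    ← uIoc_of_le pi_div_two_pos.le]
  exact (hasExpGrowth_sin_mul_mehlerCovariance hf' hg').integral_prod_left (.restrict_uIoc _ _)

lemma integral_mul_fderiv_rotation (hγ : γ[id] = 0) (hf : ContDiff ℝ 1 f) (hg : ContDiff ℝ 1 g)
    (hf' : HasExpGrowth (fderiv ℝ f)) (hg' : HasExpGrowth (fderiv ℝ g)) (θ : ℝ) :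
    ∫ z, f z.1 * fderiv ℝ g (rotation θ z).1 (rotation θ z).2 ∂γ.prod γ =
      -sin θ * ∫ v, mehlerCovariance γ f g θ v ∂γ := by
  have hmom := HasExpMoments.of_isGaussian (γ.prod γ)
  have := hf.continuous_fderiv one_ne_zero
  have := hg.continuous_fderiv one_ne_zero
  have hfgrowth := HasExpGrowth.of_fderiv (hf.differentiable one_ne_zero) hf'
  set K : E × E → ℝ := fun z => f (rotation (-θ) z).1 * fderiv ℝ g z.1 z.2
  set J : E × E → ℝ := fun z =>
    covarianceBilinDual γ (fderiv ℝ f (rotation (-θ) z).1) (fderiv ℝ g z.1)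
  have hrot (z : E × E) : ‖(rotation (-θ) z).1‖ ≤ 2 * ‖z‖ :=
    (norm_fst_le _).trans (norm_rotation_le _ z)
  have hKint : Integrable K (γ.prod γ) :=
    ((hfgrowth.comp hrot).mul (hg'.comp_fst.clm_apply
      (.of_norm_le_mul_norm (K := 1) (by simp)))).integrable hmom
      (Continuous.aestronglyMeasurable (by fun_prop))
  have hJint : Integrable J (γ.prod γ) :=
    ((hf'.comp hrot).bilin_apply _ hg'.comp_fst).integrable hmom
      (Continuous.aestronglyMeasurable (by fun_prop))
  have hinner (u : E) : ∫ w, K (u, w) ∂γ = -sin θ * ∫ w, J (u, w) ∂γ :=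
    integral_comp_rotation_neg_mul_dual hγ hf hf' θ u (fderiv ℝ g u)
  calc ∫ z, f z.1 * fderiv ℝ g (rotation θ z).1 (rotation θ z).2 ∂γ.prod γ
      = ∫ z, K (rotation θ z) ∂γ.prod γ := by simp only [K, rotation_neg_rotation]
    _ = ∫ u, ∫ w, K (u, w) ∂γ ∂γ := by
        rw [integral_comp_rotation hγ θ (by fun_prop), integral_prod _ hKint]
    _ = -sin θ * ∫ z, J z ∂γ.prod γ := by
        simp only [hinner, integral_const_mul, integral_prod _ hJint]
    _ = -sin θ * ∫ z, J (rotation θ z) ∂γ.prod γ := by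
        rw [integral_comp_rotation hγ θ (by fun_prop)]
    _ = -sin θ * ∫ v, mehlerCovariance γ f g θ v ∂γ := by
        rw [integral_prod _ (integrable_comp_rotation hγ θ hJint)]
        simp only [J, rotation_neg_rotation]
        rfl

lemma integral_mul_sub_integral_eq_integral_covarianceKernel (hγ : γ[id] = 0)
    (hf : ContDiff ℝ 1 f) (hg : ContDiff ℝ 1 g)
    (hf' : HasExpGrowth (fderiv ℝ f)) (hg' : HasExpGrowth (fderiv ℝ g)) :
    ∫ v, f v * (g v - ∫ w, g w ∂γ) ∂γ = ∫ v, covarianceKernel γ f g v ∂γ := by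
  have hmom := HasExpMoments.of_isGaussian γ
  have := hg.continuous_fderiv one_ne_zero
  have hfgrowth := HasExpGrowth.of_fderiv (hf.differentiable one_ne_zero) hf'
  have hggrowth := HasExpGrowth.of_fderiv (hg.differentiable one_ne_zero) hg'
  have hG : HasExpGrowth fun p : ℝ × (E × E) =>
      f p.2.1 * fderiv ℝ g (rotation p.1 p.2).1 (rotation p.1 p.2).2 := by
    have hrot (p : ℝ × (E × E)) : ‖rotation p.1 p.2‖ ≤ 2 * ‖p‖ :=
      (norm_rotation_le p.1 p.2).trans (by gcongr; exact norm_snd_le p)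
    exact hfgrowth.comp_fst.comp_snd.mul
      ((hg'.comp fun p => (norm_fst_le _).trans (hrot p)).clm_apply
        (.of_norm_le_mul_norm fun p => (norm_snd_le _).trans (hrot p)))
  have hGint := hG.integrable_uIoc_prod (.of_isGaussian (γ.prod γ)) 0 (π / 2)
    (Continuous.aestronglyMeasurable (by fun_prop))
  have hkint := (hasExpGrowth_sin_mul_mehlerCovariance (γ := γ) hf' hg').integrable_uIoc_prod
    hmom 0 (π / 2) (stronglyMeasurable_sin_mul_mehlerCovariance hf hg).aestronglyMeasurable
  calc ∫ v, f v * (g v - ∫ w, g w ∂γ) ∂γ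
      = ∫ z, f z.1 * (g z.1 - g z.2) ∂γ.prod γ :=
        integral_mul_sub_integral_eq_integral_prod
          (hfgrowth.integrable hmom hf.continuous.aestronglyMeasurable)
          (hggrowth.integrable hmom hg.continuous.aestronglyMeasurable)
          ((hfgrowth.mul hggrowth).integrable hmom (Continuous.aestronglyMeasurable (by fun_prop)))
    _ = -∫ z, (∫ θ in 0..π / 2,
          f z.1 * fderiv ℝ g (rotation θ z).1 (rotation θ z).2) ∂γ.prod γ := by
        simp only [intervalIntegral.integral_const_mul, integral_fderiv_rotation_fst hg,
          ← integral_neg, ← mul_neg, neg_sub]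
    _ = -∫ θ in 0..π / 2,
          ∫ z, f z.1 * fderiv ℝ g (rotation θ z).1 (rotation θ z).2 ∂γ.prod γ := by
        rw [intervalIntegral_integral_swap hGint]
    _ = ∫ θ in 0..π / 2, (∫ v, sin θ * mehlerCovariance γ f g θ v ∂γ) := by
        simp only [integral_mul_fderiv_rotation hγ hf hg hf' hg', integral_const_mul, neg_mul,
          intervalIntegral.integral_neg, neg_neg]
    _ = ∫ v, covarianceKernel γ f g v ∂γ := intervalIntegral_integral_swap hkint

end CovarianceKernel

section SteinDiscrepancy

lemma integral_abs_le_sqrt_integral_sq {X : Type*} [MeasurableSpace X] {ν : Measure X}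
    [IsProbabilityMeasure ν] {f : X → ℝ} (hf : MemLp f 2 ν) :
    ∫ x, |f x| ∂ν ≤ √(∫ x, f x ^ 2 ∂ν) := by
  have hvar : 0 ≤ Var[|f|; ν] := variance_nonneg |f| ν
  rw [variance_eq_sub hf.abs, sub_nonneg] at hvar
  refine le_sqrt_of_sq_le ?_
  simpa using hvar

variable {E : Type*} [NormedAddCommGroup E] [NormedSpace ℝ E] {φ : ℝ → ℝ} {g : E → ℝ}

lemma hasExpGrowth_fderiv_comp (hφ : Differentiable ℝ φ) (hφ' : HasExpGrowth fun v => deriv φ (g v))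
    (hg : Differentiable ℝ g) (hg' : HasExpGrowth (fderiv ℝ g)) :
    HasExpGrowth (fderiv ℝ (φ ∘ g)) := by
  have hchain : fderiv ℝ (φ ∘ g) = fun v => deriv φ (g v) • fderiv ℝ g v :=
    funext fun v => ((hφ _).hasDerivAt.comp_hasFDerivAt v (hg v).hasFDerivAt).fderiv
  rw [hchain]
  exact hφ'.smul hg'

variable [MeasurableSpace E] [BorelSpace E] [SecondCountableTopology E] [CompleteSpace E]
  {γ : Measure E} [IsGaussian γ]

lemma memLp_covarianceKernel_sub_one (hg : ContDiff ℝ 1 g) (hg' : HasExpGrowth (fderiv ℝ g)) :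
    MemLp (fun v => covarianceKernel γ g g v - 1) 2 γ := by
  have hgrowth := (hasExpGrowth_covarianceKernel (γ := γ) hg' hg').sub (.const 1)
  have hmeas : AEStronglyMeasurable (fun v => covarianceKernel γ g g v - 1) γ :=
    (stronglyMeasurable_covarianceKernel hg hg).aestronglyMeasurable.sub
      aestronglyMeasurable_const
  rw [memLp_two_iff_integrable_sq hmeas]
  simp only [sq]
  exact (hgrowth.mul hgrowth).integrable (.of_isGaussian γ) (hmeas.mul hmeas)

lemma integral_mul_comp_eq_integral_deriv_mul_covarianceKernel (hγ : γ[id] = 0)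
    (hφ : ContDiff ℝ 1 φ) (hφ' : HasExpGrowth fun v => deriv φ (g v)) (hg : ContDiff ℝ 1 g)
    (hg' : HasExpGrowth (fderiv ℝ g)) (hmean : ∫ v, g v ∂γ = 0) :
    ∫ v, g v * φ (g v) ∂γ = ∫ v, deriv φ (g v) * covarianceKernel γ g g v ∂γ := by
  have hφdiff := hφ.differentiable one_ne_zero
  have hgdiff := hg.differentiable one_ne_zero
  simpa [hmean, covarianceKernel_comp γ (hφdiff _) (hgdiff _), mul_comm] using
    integral_mul_sub_integral_eq_integral_covarianceKernel hγ (hφ.comp hg) hg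
      (hasExpGrowth_fderiv_comp hφdiff hφ' hgdiff hg') hg'

lemma abs_integral_deriv_sub_mul_le (hγ : γ[id] = 0) (hφ : ContDiff ℝ 1 φ) {K : ℝ}
    (hφ' : ∀ x, |deriv φ x| ≤ K) (hg : ContDiff ℝ 1 g) (hg' : HasExpGrowth (fderiv ℝ g))
    (hmean : ∫ v, g v ∂γ = 0) :
    |∫ v, (deriv φ (g v) - g v * φ (g v)) ∂γ| ≤
      K * √(∫ v, (covarianceKernel γ g g v - 1) ^ 2 ∂γ) := by
  have hmom := HasExpMoments.of_isGaussian γ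
  have hφdiff := hφ.differentiable one_ne_zero
  have hgdiff := hg.differentiable one_ne_zero
  have := hφ.continuous_deriv_one
  have hφg' : HasExpGrowth fun v => deriv φ (g v) := .of_norm_le fun v => hφ' (g v)
  have hφg : HasExpGrowth fun v => φ (g v) := HasExpGrowth.of_fderiv (hφdiff.comp hgdiff)
    (hasExpGrowth_fderiv_comp hφdiff hφg' hgdiff hg')
  have hderiv_int := hφg'.integrable hmom (Continuous.aestronglyMeasurable (by fun_prop))
  have hmul_int := ((HasExpGrowth.of_fderiv hgdiff hg').mul hφg).integrable hmom
    (Continuous.aestronglyMeasurable (by fun_prop))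
  have hkernel := memLp_covarianceKernel_sub_one (γ := γ) hg hg'
  have hkernel_int := (hφg'.mul (hasExpGrowth_covarianceKernel (γ := γ) hg' hg')).integrable hmom
    ((Continuous.aestronglyMeasurable (by fun_prop)).mul
      (stronglyMeasurable_covarianceKernel hg hg).aestronglyMeasurable)
  calc |∫ v, (deriv φ (g v) - g v * φ (g v)) ∂γ|
      = |∫ v, deriv φ (g v) * (covarianceKernel γ g g v - 1) ∂γ| := by
        simp only [mul_sub, mul_one]
        rw [integral_sub hderiv_int hmul_int, integral_sub hkernel_int hderiv_int,
          integral_mul_comp_eq_integral_deriv_mul_covarianceKernel hγ hφ hφg' hg hg' hmean,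
          abs_sub_comm]
    _ ≤ ∫ v, K * |covarianceKernel γ g g v - 1| ∂γ := by
        rw [← norm_eq_abs]
        refine norm_integral_le_of_norm_le ((hkernel.integrable one_le_two).abs.const_mul K)
          (.of_forall fun v => ?_)
        rw [norm_mul]
        exact mul_le_mul_of_nonneg_right (hφ' _) (norm_nonneg _)
    _ ≤ K * √(∫ v, (covarianceKernel γ g g v - 1) ^ 2 ∂γ) := by
        rw [integral_const_mul]
        exact mul_le_mul_of_nonneg_left (integral_abs_le_sqrt_integral_sq hkernel)
          ((abs_nonneg _).trans (hφ' 0))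

end SteinDiscrepancy

section SteinEquation

lemma hasDerivAt_gaussianPDFReal_zero_one (x : ℝ) :
    HasDerivAt (gaussianPDFReal 0 1) (-x * gaussianPDFReal 0 1 x) x := by
  have hexp := (((hasDerivAt_pow 2 x).neg.div_const 2).exp).const_mul (√(2 * π))⁻¹
  simp only [gaussianPDFReal_def, NNReal.coe_one, mul_one, sub_zero]
  refine hexp.congr_deriv ?_
  simp only [Pi.neg_apply]
  ring

lemma tendsto_gaussianPDFReal_zero_one_atBot :
    Filter.Tendsto (gaussianPDFReal 0 1) Filter.atBot (nhds 0) := by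
  have hsq : Filter.Tendsto (fun x : ℝ => -x ^ 2 / 2) Filter.atBot Filter.atBot :=
    (Filter.tendsto_neg_atTop_atBot.comp
      (Filter.Tendsto.comp (Filter.tendsto_pow_atTop two_ne_zero)
        Filter.tendsto_abs_atBot_atTop)).atBot_div_const two_pos |>.congr fun x => by simp
  have hexp := (tendsto_exp_atBot.comp hsq).const_mul (√(2 * π))⁻¹
  simpa [Function.comp_def, gaussianPDFReal_def] using hexp

lemma integrable_neg_mul_gaussianPDFReal_zero_one :
    Integrable fun y => -y * gaussianPDFReal 0 1 y := by
  refine ((integrable_mul_exp_neg_mul_sq (b := 1 / 2) one_half_pos).neg.const_mul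
    (√(2 * π))⁻¹).congr (.of_forall fun y => ?_)
  simp only [gaussianPDFReal, NNReal.coe_one, mul_one, sub_zero, Pi.neg_apply]
  ring_nf

lemma gaussianPDFReal_zero_one_neg (x : ℝ) : gaussianPDFReal 0 1 (-x) = gaussianPDFReal 0 1 x := by
  simp [gaussianPDFReal_def]

lemma setIntegral_Iic_neg_mul_gaussianPDFReal (x : ℝ) :
    ∫ y in Iic x, -y * gaussianPDFReal 0 1 y = gaussianPDFReal 0 1 x := by
  simpa using integral_Iic_of_hasDerivAt_of_tendsto' (a := x)
    (fun y _ => hasDerivAt_gaussianPDFReal_zero_one y)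
    integrable_neg_mul_gaussianPDFReal_zero_one.integrableOn tendsto_gaussianPDFReal_zero_one_atBot

variable {k : ℝ → ℝ} {K : ℝ}

lemma abs_mul_setIntegral_Iic_mul_gaussianPDFReal_le (hk : ∀ y, |k y| ≤ K) {x : ℝ} (hx : x ≤ 0) :
    |x * ∫ y in Iic x, k y * gaussianPDFReal 0 1 y| ≤ K * gaussianPDFReal 0 1 x := by
  rw [← setIntegral_Iic_neg_mul_gaussianPDFReal, ← integral_const_mul, ← integral_const_mul,
    ← norm_eq_abs]
  refine norm_integral_le_of_norm_le
    (integrable_neg_mul_gaussianPDFReal_zero_one.const_mul K).integrableOn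
    (ae_restrict_of_forall_mem measurableSet_Iic fun y (hy : y ≤ x) => ?_)
  have hp := gaussianPDFReal_nonneg 0 1 y
  calc ‖x * (k y * gaussianPDFReal 0 1 y)‖ = |k y| * (-x * gaussianPDFReal 0 1 y) := by
        rw [norm_eq_abs, abs_mul, abs_mul, abs_of_nonpos hx, abs_of_nonneg hp]
        ring
    _ ≤ K * (-y * gaussianPDFReal 0 1 y) := by
        gcongr
        · exact mul_nonneg (neg_nonneg.2 hx) hp
        · exact (abs_nonneg _).trans (hk 0)
        · exact hk y

lemma abs_mul_setIntegral_Ioi_mul_gaussianPDFReal_le (hk : ∀ y, |k y| ≤ K) {x : ℝ} (hx : 0 ≤ x) :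
    |x * ∫ y in Ioi x, k y * gaussianPDFReal 0 1 y| ≤ K * gaussianPDFReal 0 1 x := by
  have hreflect : ∫ y in Iic (-x), k (-y) * gaussianPDFReal 0 1 y =
      ∫ y in Ioi x, k y * gaussianPDFReal 0 1 y := by
    simpa [gaussianPDFReal_zero_one_neg] using
      integral_comp_neg_Iic (-x) fun y => k y * gaussianPDFReal 0 1 y
  simpa [hreflect, gaussianPDFReal_zero_one_neg] using
    abs_mul_setIntegral_Iic_mul_gaussianPDFReal_le (fun y => hk (-y)) (neg_nonpos.2 hx)

/-- The solution `f` of Stein's equation `f' x - x * f x = k x` for a datum `k` which is centred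
under the standard Gaussian. -/
noncomputable def steinSolution (k : ℝ → ℝ) (x : ℝ) : ℝ :=
  (gaussianPDFReal 0 1 x)⁻¹ * ∫ y in Iic x, k y * gaussianPDFReal 0 1 y

lemma integrable_mul_gaussianPDFReal_zero_one (hk : Continuous k) (hbd : ∀ y, |k y| ≤ K) :
    Integrable fun y => k y * gaussianPDFReal 0 1 y :=
  (integrable_gaussianPDFReal 0 1).bdd_mul hk.aestronglyMeasurable (.of_forall hbd)

lemma hasDerivAt_setIntegral_Iic {F : Type*} [NormedAddCommGroup F] [NormedSpace ℝ F]
    [CompleteSpace F] {q : ℝ → F} (hq : Continuous q) (hint : Integrable q) (x : ℝ) :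
    HasDerivAt (fun x => ∫ y in Iic x, q y) (q x) x := by
  have hsplit : (fun x => ∫ y in Iic x, q y) = fun x => (∫ y in Iic 0, q y) + ∫ y in 0..x, q y :=
    funext fun x => by
      rw [← intervalIntegral.integral_Iic_sub_Iic hint.integrableOn hint.integrableOn,
        add_sub_cancel]
  rw [hsplit]
  exact (hq.integral_hasStrictDerivAt 0 x).hasDerivAt.const_add _

lemma hasDerivAt_steinSolution (hk : Continuous k) (hbd : ∀ y, |k y| ≤ K) (x : ℝ) :
    HasDerivAt (steinSolution k) (x * steinSolution k x + k x) x := by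
  have hp : gaussianPDFReal 0 1 x ≠ 0 := (gaussianPDFReal_pos 0 1 x one_ne_zero).ne'
  have hpcont : Continuous (gaussianPDFReal 0 1) :=
    continuous_iff_continuousAt.2 fun y => (hasDerivAt_gaussianPDFReal_zero_one y).continuousAt
  refine (((hasDerivAt_gaussianPDFReal_zero_one x).inv hp).mul (hasDerivAt_setIntegral_Iic
    (by fun_prop) (integrable_mul_gaussianPDFReal_zero_one hk hbd) x)).congr_deriv ?_
  simp only [steinSolution, Pi.inv_apply]
  field_simp

lemma abs_mul_steinSolution_le (hk : Continuous k) (hbd : ∀ y, |k y| ≤ K)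
    (hmean : ∫ y, k y ∂gaussianReal 0 1 = 0) (x : ℝ) : |x * steinSolution k x| ≤ K := by
  have hp := gaussianPDFReal_pos 0 1 x one_ne_zero
  have hint := integrable_mul_gaussianPDFReal_zero_one hk hbd
  rw [steinSolution, mul_left_comm, abs_mul, abs_of_pos (inv_pos.2 hp), inv_mul_le_iff₀ hp,
    mul_comm _ K]
  rcases le_total x 0 with hx | hx
  · exact abs_mul_setIntegral_Iic_mul_gaussianPDFReal_le hbd hx
  · have hIic : ∫ y in Iic x, k y * gaussianPDFReal 0 1 y =
        -∫ y in Ioi x, k y * gaussianPDFReal 0 1 y := by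
      rw [integral_gaussianReal_eq_integral_smul one_ne_zero] at hmean
      rw [eq_neg_iff_add_eq_zero,
        intervalIntegral.integral_Iic_add_Ioi hint.integrableOn hint.integrableOn]
      simpa only [smul_eq_mul, mul_comm] using hmean
    rw [hIic, mul_neg, abs_neg]
    exact abs_mul_setIntegral_Ioi_mul_gaussianPDFReal_le hbd hx

lemma abs_deriv_steinSolution_le (hk : Continuous k) (hbd : ∀ y, |k y| ≤ K)
    (hmean : ∫ y, k y ∂gaussianReal 0 1 = 0) (x : ℝ) : |deriv (steinSolution k) x| ≤ 2 * K := by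
  rw [(hasDerivAt_steinSolution hk hbd x).deriv, two_mul]
  exact (abs_add_le _ _).trans (add_le_add (abs_mul_steinSolution_le hk hbd hmean x) (hbd x))

lemma contDiff_steinSolution (hk : Continuous k) (hbd : ∀ y, |k y| ≤ K) :
    ContDiff ℝ 1 (steinSolution k) := by
  have hderiv := hasDerivAt_steinSolution hk hbd
  have hdiff : Differentiable ℝ (steinSolution k) := fun x => (hderiv x).differentiableAt
  have hcont := hdiff.continuous
  rw [contDiff_one_iff_deriv, funext fun x => (hderiv x).deriv]
  exact ⟨hdiff, by fun_prop⟩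

end SteinEquation

section TotalVariation

lemma abs_measureReal_sub_le_of_forall_continuous {X : Type*} [PseudoEMetricSpace X]
    [MeasurableSpace X] [BorelSpace X] {μ ν : Measure X} [IsFiniteMeasure μ] [IsFiniteMeasure ν]
    {b : ℝ} (hb : ∀ h : X → ℝ, Continuous h → (∀ x, h x ∈ Icc 0 1) →
      |∫ x, h x ∂μ - ∫ x, h x ∂ν| ≤ b) {B : Set X} (hB : MeasurableSet B) :
    |μ.real B - ν.real B| ≤ b := by
  have hclosed (F : Set X) (hF : IsClosed F) : |μ.real F - ν.real F| ≤ b := by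
    have hlim (ρ : Measure X) [IsFiniteMeasure ρ] := tendsto_integral_thickenedIndicator_of_isClosed
      ρ hF (fun k : ℕ => Nat.one_div_pos_of_nat) tendsto_one_div_add_atTop_nhds_zero_nat
    refine le_of_tendsto ((hlim μ).sub (hlim ν)).abs (.of_forall fun k => hb _ (by fun_prop) ?_)
    exact fun x => ⟨NNReal.coe_nonneg _, mod_cast thickenedIndicator_le_one _ F x⟩
  refine le_of_forall_pos_le_add fun ε hε => ?_
  obtain ⟨F, hFB, hF, hlt⟩ := hB.exists_isClosed_sdiff_lt (μ := μ + ν) (measure_ne_top _ _)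
    (ENNReal.ofReal_pos.2 hε).ne'
  have hdiff : (μ + ν).real (B \ F) < ε := ENNReal.toReal_lt_of_lt_ofReal hlt
  rw [measureReal_add_apply] at hdiff
  have hμ := measureReal_sdiff (μ := μ) hFB hF.measurableSet
  have hν := measureReal_sdiff (μ := ν) hFB hF.measurableSet
  have hμ₀ := measureReal_nonneg (μ := μ) (s := B \ F)
  have hν₀ := measureReal_nonneg (μ := ν) (s := B \ F)
  obtain ⟨hlower, hupper⟩ := abs_le.1 (hclosed F hF)
  exact abs_le.2 ⟨by linarith, by linarith⟩

variable {E : Type*} [NormedAddCommGroup E] [NormedSpace ℝ E] [MeasurableSpace E] [BorelSpace E]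
  [SecondCountableTopology E] [CompleteSpace E] {γ : Measure E} [IsGaussian γ] {g : E → ℝ}

lemma abs_integral_comp_sub_integral_gaussianReal_le (hγ : γ[id] = 0) (hg : ContDiff ℝ 1 g)
    (hg' : HasExpGrowth (fderiv ℝ g)) (hmean : ∫ v, g v ∂γ = 0) {h : ℝ → ℝ} (hh : Continuous h)
    (hh' : ∀ x, h x ∈ Icc 0 1) :
    |∫ v, h (g v) ∂γ - ∫ x, h x ∂gaussianReal 0 1| ≤
      2 * √(∫ v, (covarianceKernel γ g g v - 1) ^ 2 ∂γ) := by
  have hbound {x : ℝ} : ‖h x‖ ≤ 1 := abs_le.2 ⟨by linarith [(hh' x).1], (hh' x).2⟩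
  have hint : Integrable h (gaussianReal 0 1) :=
    .of_bound hh.aestronglyMeasurable 1 (.of_forall fun _ => hbound)
  have hgint : Integrable (fun v => h (g v)) γ :=
    .of_bound (Continuous.aestronglyMeasurable (by fun_prop)) 1 (.of_forall fun _ => hbound)
  set m := ∫ x, h x ∂gaussianReal 0 1
  have hm : m ∈ Icc 0 1 := ⟨integral_nonneg fun x => (hh' x).1,
    by simpa using integral_mono hint (integrable_const 1) fun x => (hh' x).2⟩
  set k : ℝ → ℝ := fun x => h x - m
  have hk : Continuous k := by fun_prop
  have hbd (x : ℝ) : |k x| ≤ 1 :=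
    abs_le.2 ⟨by linarith [(hh' x).1, hm.2], by linarith [(hh' x).2, hm.1]⟩
  have hkmean : ∫ x, k x ∂gaussianReal 0 1 = 0 := by
    simp [k, m, integral_sub hint (integrable_const _)]
  have hstein (x : ℝ) : deriv (steinSolution k) x - x * steinSolution k x = h x - m := by
    rw [(hasDerivAt_steinSolution hk hbd x).deriv, add_sub_cancel_left]
  have hdiscrepancy := abs_integral_deriv_sub_mul_le hγ (contDiff_steinSolution hk hbd)
    (abs_deriv_steinSolution_le hk hbd hkmean) hg hg' hmean
  simpa [hstein, integral_sub hgint (integrable_const m)] using hdiscrepancy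

theorem abs_measureReal_map_sub_gaussianReal_le (hγ : γ[id] = 0) (hg : ContDiff ℝ 1 g)
    (hg' : HasExpGrowth (fderiv ℝ g)) (hmean : ∫ v, g v ∂γ = 0) {B : Set ℝ}
    (hB : MeasurableSet B) :
    |(γ.map g).real B - (gaussianReal 0 1).real B| ≤
      2 * √(∫ v, (covarianceKernel γ g g v - 1) ^ 2 ∂γ) := by
  have hgm : AEMeasurable g γ := hg.continuous.aemeasurable
  have := Measure.isProbabilityMeasure_map hgm
  refine abs_measureReal_sub_le_of_forall_continuous (fun h hh hh' => ?_) hB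
  rw [integral_map hgm hh.aestronglyMeasurable]
  exact abs_integral_comp_sub_integral_gaussianReal_le hγ hg hg' hmean hh hh'

end TotalVariation

section StandardGaussianVector

variable {ι : Type*} [Fintype ι]

lemma isGaussian_pi (μ : ι → Measure ℝ) [∀ i, IsGaussian (μ i)] : IsGaussian (Measure.pi μ) := by
  have heval (i : ι) : HasGaussianLaw (fun x : ι → ℝ => x i) (Measure.pi μ) :=
    ⟨by rw [(measurePreserving_eval μ i).map_eq]; infer_instance⟩
  simpa using ((iIndepFun_pi (μ := μ) (X := fun _ => id)
    fun _ => aemeasurable_id).hasGaussianLaw heval).isGaussian_map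

lemma integral_id_pi_gaussianReal_zero_one :
    (Measure.pi fun _ : ι => gaussianReal 0 1)[id] = 0 := by
  have := isGaussian_pi fun _ : ι => gaussianReal 0 1
  ext i
  rw [eval_integral fun i => IsGaussian.integrable_id.eval i]
  simp [integral_eval, integral_id_gaussianReal]

lemma covariance_eval_pi_gaussianReal_zero_one [DecidableEq ι] (i j : ι) :
    cov[fun x => x i, fun x => x j; Measure.pi fun _ : ι => gaussianReal 0 1] =
      if i = j then 1 else 0 := by
  split_ifs with hij
  · subst hij
    have hvar := variance_map (X := id) (μ := Measure.pi fun _ : ι => gaussianReal 0 1)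
      (Y := fun x => x i) aemeasurable_id (measurable_pi_apply i).aemeasurable
    rw [(measurePreserving_eval _ i).map_eq, variance_id_gaussianReal] at hvar
    rw [covariance_self (measurable_pi_apply i).aemeasurable]
    exact hvar.symm
  · have := isGaussian_pi fun _ : ι => gaussianReal 0 1
    exact ((iIndepFun_pi (X := fun _ => id) fun _ => aemeasurable_id).indepFun hij
      ).covariance_eq_zero (IsGaussian.memLp_two_id.eval i) (IsGaussian.memLp_two_id.eval j)

lemma covarianceBilinDual_pi_gaussianReal_zero_one [DecidableEq ι] (L M : StrongDual ℝ (ι → ℝ)) :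
    covarianceBilinDual (Measure.pi fun _ : ι => gaussianReal 0 1) L M =
      ∑ i, L (Pi.single i 1) * M (Pi.single i 1) := by
  have := isGaussian_pi fun _ : ι => gaussianReal 0 1
  have hexpand (N : StrongDual ℝ (ι → ℝ)) : ⇑N = fun x => ∑ i, N (Pi.single i 1) * x i := by
    ext x
    conv_lhs => rw [pi_eq_sum_univ' x]
    simp [mul_comm]
  have hmem (i : ι) : MemLp (fun x : ι → ℝ => x i) 2 (Measure.pi fun _ : ι => gaussianReal 0 1) :=
    IsGaussian.memLp_two_id.eval i
  calc covarianceBilinDual (Measure.pi fun _ : ι => gaussianReal 0 1) L M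
      = cov[fun x => ∑ i, L (Pi.single i 1) * x i, fun x => ∑ i, M (Pi.single i 1) * x i;
          Measure.pi fun _ : ι => gaussianReal 0 1] := by
        rw [covarianceBilinDual_eq_covariance IsGaussian.memLp_two_id, ← hexpand, ← hexpand]
    _ = ∑ i, L (Pi.single i 1) * M (Pi.single i 1) := by
        rw [covariance_fun_sum_fun_sum (fun i => (hmem i).const_mul _) fun i =>
          (hmem i).const_mul _]
        simp only [covariance_const_mul_left, covariance_const_mul_right,
          covariance_eval_pi_gaussianReal_zero_one, mul_ite, mul_one, mul_zero, Finset.sum_ite_eq,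
          Finset.mem_univ, if_true]
        exact Finset.sum_congr rfl fun i _ => mul_comm _ _

end StandardGaussianVector

section ChatterjeeS

/- Substitution `t = cos² θ`. -/
lemma setIntegral_Ioc_one_div_two_mul_sqrt_mul (Φ : ℝ → ℝ → ℝ) :
    ∫ t in Ioc 0 1, 1 / (2 * √t) * Φ (√t) (√(1 - t)) =
      ∫ θ in 0..π / 2, sin θ * Φ (cos θ) (sin θ) := by
  have hderiv (θ : ℝ) : HasDerivAt (fun θ => cos θ ^ 2) (-(2 * cos θ * sin θ)) θ :=
    ((hasDerivAt_cos θ).pow 2).congr_deriv (by simp)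
  have hcos {θ : ℝ} (hθ : θ ∈ Ioo 0 (π / 2)) : 0 < cos θ :=
    cos_pos_of_mem_Ioo ⟨by linarith [hθ.1, pi_pos], hθ.2⟩
  have hsin {θ : ℝ} (hθ : θ ∈ Ioo 0 (π / 2)) : 0 < sin θ :=
    sin_pos_of_mem_Ioo ⟨hθ.1, by linarith [hθ.2, pi_pos]⟩
  have hsubst := integral_Icc_deriv_smul_of_deriv_nonpos
    (g := fun t => 1 / (2 * √t) * Φ (√t) (√(1 - t))) (Continuous.continuousOn (by fun_prop))
    (fun θ _ => hderiv θ) (fun θ hθ =>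
      neg_nonpos.2 (by have := hcos hθ; have := hsin hθ; positivity)) pi_div_two_pos.le
  simp only [cos_pi_div_two, cos_zero, one_pow, ne_eq, OfNat.ofNat_ne_zero, not_false_eq_true,
    zero_pow] at hsubst
  rw [← integral_Icc_eq_integral_Ioc, ← neg_eq_iff_eq_neg.2 hsubst,
    intervalIntegral.integral_of_le pi_div_two_pos.le, ← integral_Icc_eq_integral_Ioc,
    integral_Icc_eq_integral_Ioo, integral_Icc_eq_integral_Ioo, ← integral_neg]
  refine setIntegral_congr_fun measurableSet_Ioo fun θ hθ => ?_
  have hcosθ := hcos hθ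
  have hsinsq : 1 - cos θ ^ 2 = sin θ ^ 2 := by rw [sin_sq]
  simp only [hsinsq, sqrt_sq hcosθ.le, sqrt_sq (hsin hθ).le, smul_eq_mul]
  field_simp

variable {Ω : Type*} [MeasurableSpace Ω] {P : Measure Ω} {n : ℕ} {V : Ω → Fin n → ℝ}
  {g : (Fin n → ℝ) → ℝ}

lemma chatterjeeS_eq_covarianceKernel (hV : HasLaw V (Measure.pi fun _ => gaussianReal 0 1) P)
    (hg : ContDiff ℝ 1 g) :
    chatterjeeS P V g = covarianceKernel (Measure.pi fun _ => gaussianReal 0 1) g g := by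
  have := hg.continuous_fderiv one_ne_zero
  ext v
  have hinner (a b : ℝ) :
      ∫ ω, ∑ i, fderiv ℝ g v (Pi.single i 1) * fderiv ℝ g (a • v + b • V ω) (Pi.single i 1) ∂P =
        ∫ w, covarianceBilinDual (Measure.pi fun _ => gaussianReal 0 1) (fderiv ℝ g v)
          (fderiv ℝ g (a • v + b • w)) ∂Measure.pi fun _ => gaussianReal 0 1 := by
    rw [← hV.integral_comp (Continuous.aestronglyMeasurable (by fun_prop))]
    simp only [covarianceBilinDual_pi_gaussianReal_zero_one, Function.comp_def]
  simp only [chatterjeeS, hinner]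
  exact setIntegral_Ioc_one_div_two_mul_sqrt_mul fun a b =>
    ∫ w, covarianceBilinDual (Measure.pi fun _ => gaussianReal 0 1) (fderiv ℝ g v)
      (fderiv ℝ g (a • v + b • w)) ∂Measure.pi fun _ => gaussianReal 0 1

theorem chatterjee_total_variation_bound_general
    (hV : HasLaw V (Measure.pi fun _ => gaussianReal 0 1) P) (hg : ContDiff ℝ 1 g)
    (hg' : HasExpGrowth (fderiv ℝ g)) (hmean : ∫ ω, g (V ω) ∂P = 0) {B : Set ℝ}
    (hB : MeasurableSet B) :
    |P.real {ω | g (V ω) ∈ B} - (gaussianReal 0 1).real B| ≤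
      2 * √(∫ ω, (chatterjeeS P V g (V ω) - 1) ^ 2 ∂P) := by
  have := isGaussian_pi fun _ : Fin n => gaussianReal 0 1
  have hmean' : ∫ v, g v ∂Measure.pi (fun _ => gaussianReal 0 1) = 0 :=
    (hV.integral_comp hg.continuous.aestronglyMeasurable).symm.trans hmean
  have hkernel := stronglyMeasurable_covarianceKernel
    (γ := Measure.pi fun _ => gaussianReal 0 1) hg hg
  have hevent : P.real {ω | g (V ω) ∈ B} =
      ((Measure.pi fun _ => gaussianReal 0 1).map g).real B := by
    rw [map_measureReal_apply hg.continuous.measurable hB, ← hV.map_eq,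
      map_measureReal_apply_of_aemeasurable hV.aemeasurable (hg.continuous.measurable hB)]
    rfl
  rw [hevent, chatterjeeS_eq_covarianceKernel hV hg]
  convert abs_measureReal_map_sub_gaussianReal_le integral_id_pi_gaussianReal_zero_one hg hg'
    hmean' hB using 3
  exact hV.integral_comp (((hkernel.sub stronglyMeasurable_const).pow 2).aestronglyMeasurable)

end ChatterjeeS

/-- Chatterjee's total variation bound: for `Y = g(V)` with `V` a standard Gaussian vector,
`g` smooth with subexponential growth of `g` and all its derivatives, `E[g(V)] = 0`,
`E[g(V)²] = 1`, and the law of `Y` absolutely continuous, one has, with `Z ∼ N(0,1)`,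
`|P(Y ∈ B) − P(Z ∈ B)| ≤ 2 (E[(S(V) − 1)²])^{1/2}` for every Borel set `B ⊆ ℝ`. -/
theorem chatterjee_total_variation_bound
    {Ω : Type*} [MeasurableSpace Ω] (P : Measure Ω) [IsProbabilityMeasure P]
    {n : ℕ} (V : Ω → (Fin n → ℝ)) (hV : Measurable V)
    (hlaw : P.map V = Measure.pi (fun _ : Fin n => gaussianReal 0 1))
    (g : (Fin n → ℝ) → ℝ) (hg : ContDiff ℝ (⊤ : ℕ∞) g)
    (hgrowth : ∀ k : ℕ, ∀ ε > (0 : ℝ), ∃ c : ℝ, ∀ x,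
      ‖iteratedFDeriv ℝ k g x‖ ≤ c * Real.exp (ε * ‖x‖))
    (hmean : ∫ ω, g (V ω) ∂P = 0)
    (hvar : ∫ ω, (g (V ω)) ^ 2 ∂P = 1)
    (habs : P.map (fun ω => g (V ω)) ≪ (volume : Measure ℝ)) :
    ∀ B : Set ℝ, MeasurableSet B →
      |(P {ω | g (V ω) ∈ B}).toReal - ((gaussianReal 0 1) B).toReal|
        ≤ 2 * Real.sqrt (∫ ω, (chatterjeeS P V g (V ω) - 1) ^ 2 ∂P) := by
  have hgrowth' : HasExpGrowth (fderiv ℝ g) := by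
    obtain ⟨c, hc⟩ := hgrowth 1 1 one_pos
    exact ⟨c, 1, fun x => norm_iteratedFDeriv_one (𝕜 := ℝ) g ▸ hc x⟩
  exact fun B hB => chatterjee_total_variation_bound_general ⟨hV.aemeasurable, hlaw⟩
    (hg.of_le (mod_cast le_top)) hgrowth' hmean hB
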